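/- Adapted comparison principle: Let s > 0 and let J be an admissible kernel. Let 0 ≤ t₀ < t₁, R ∈ ℝ, and let u, v : [t₀,t₁) × ℝ → ℝ be bounded, continuous, with t ↦ u(t,x) and t ↦ v(t,x) C¹ on (t₀,t₁) for each x, and such that all integrals D u(t,x), D v(t,x) converge absolutely. Assume ∂_t u(t,x) ≥ D u(t,x) and ∂_t v(t,x) ≤ D v(t,x) for all t ∈ (t₀,t₁) and x ≥ R; u(t,x) > v(t,x) for all t ∈ (t₀,t₁) and x ≤ R; and u(t₀,x) ≥ v(t₀,x) for all x ∈ ℝ. Then u(t,x) ≥ v(t,x) for all t ∈ (t₀,t₁) and x ∈ ℝ. -/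

import Mathlib

/-!
The proof is the maximum principle for `w = u - v` with the logarithmic barrier
`ψ x = log (1 + x ^ 2)`. Its symmetric second differences satisfy
`ψ (x - z) + ψ (x + z) - 2 ψ x ≤ 2 log (1 + z ^ 2)`, uniformly in `x`, and
`K = ∫ log (1 + z ^ 2) J z` is finite as soon as `z ^ 2 J z` is locally integrable, because
`J z` is at most `J0 / |z| ^ (1 + 2 s)` at infinity. If `w` were negative somewhere, then for
small `ε > 0` the function `w + ε (ψ x + (K + 1) (t - t0))` would attain a negative minimum over
a closed time slab at some `(t', x')` with `t' > t0` and `x' > R`. There `∂ₜ w ≤ -ε (K + 1)` by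
minimality in time, while `∂ₜ w ≥ D w ≥ -ε K` by minimality in space and evenness of `J`: a
contradiction.

The bound on the Bochner integral `∫ z in Icc (-1) 1, J z * z ^ 2` does not by itself provide
integrability (nor even measurability) of `J z * z ^ 2`, so the opposite case is treated
separately. If `z ^ 2 J z` is not integrable near some `z₀`, absolute convergence of the integrals
`D f` forces a bounded continuous `f` to be periodic (`exists_periodic`). For
`z₀ ≠ 0` the factor `f (x - z) - f x` must vanish at `z = z₀`, so `f (x - z₀) = f x`.
For `z₀ = 0`, no point of the graph of `f` may be touched
by a strictly concave or strictly convex parabola, and for a bounded continuous function this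
means that `f` is constant (`exists_parabola_touching`). When both `u t` and `v t` are periodic
with a common period, the ordering on `(-∞, R]` propagates to all of `ℝ`.
-/

open MeasureTheory Filter Topology Set

/-- The nonlocal convolution-type diffusion operator
`D u (t,x) = ∫ (u(t, x - z) - u(t,x)) J(z) dz`. -/
noncomputable def nonlocalD (J : ℝ → ℝ) (u : ℝ → ℝ → ℝ) (t x : ℝ) : ℝ :=
  ∫ z : ℝ, (u t (x - z) - u t x) * J z

/-- An admissible kernel for the parameter `s > 0`, with constants `J0, J1, R0`. -/
structure AdmissibleKernel (s : ℝ) (J : ℝ → ℝ) (J0 J1 R0 : ℝ) : Prop where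
  nonneg : ∀ z, 0 ≤ J z
  even : ∀ z, J (-z) = J z
  J0_pos : 0 < J0
  J1_pos : 0 < J1
  one_le_R0 : 1 ≤ R0
  second_moment : ∫ z in Icc (-1 : ℝ) 1, J z * z ^ 2 ≤ 2 * J1
  upper : ∀ z : ℝ, 1 < |z| → J z ≤ J0 / |z| ^ (1 + 2 * s)
  lower : ∀ z : ℝ, R0 ≤ |z| → J0⁻¹ / |z| ^ (1 + 2 * s) ≤ J z

/-- The initial-datum hypothesis: `u0` is continuous, nonnegative, bounded,
and `u0 ≥ a` on `(-∞, b]`. -/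
structure InitialDatum (u0 : ℝ → ℝ) (a b : ℝ) : Prop where
  continuous : Continuous u0
  nonneg : ∀ x, 0 ≤ u0 x
  bounded : ∃ M, ∀ x, u0 x ≤ M
  a_pos : 0 < a
  lower : ∀ x ≤ b, a ≤ u0 x

/-- A bounded solution of `∂ₜ u = D u` on the time interval `(0, ∞)`,
continuous on `[0, ∞) × ℝ`, `C¹` in time on `(0, ∞)` for each `x`, with all
integrals defining `D u` converging absolutely, and the equation holding
pointwise. -/
structure IsSolution (J : ℝ → ℝ) (u : ℝ → ℝ → ℝ) : Prop where
  bounded : ∃ M, ∀ t ∈ Ici (0 : ℝ), ∀ x, |u t x| ≤ M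
  continuousOn : ContinuousOn (fun p : ℝ × ℝ => u p.1 p.2) (Ici 0 ×ˢ univ)
  c1 : ∀ x, ContDiffOn ℝ 1 (fun t => u t x) (Ioi 0)
  integrable : ∀ t ∈ Ioi (0 : ℝ), ∀ x,
    Integrable fun z : ℝ => (u t (x - z) - u t x) * J z
  eqn : ∀ t ∈ Ioi (0 : ℝ), ∀ x,
    HasDerivAt (fun τ => u τ x) (nonlocalD J u t x) t

/-! ### Kernels without local second moment -/

/-- If `h * J` is integrable and `|h|` dominates `c * z ^ 2` near `z₀`, then `z ^ 2 * J` is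
integrable near `z₀`. No measurability of `J` is assumed: it is recovered from `h * J`. -/
lemma integrableAt_sq_mul {J h : ℝ → ℝ} (hh : Continuous h)
    (hi : Integrable fun z => h z * J z) {z₀ c : ℝ} (hc : 0 < c)
    (hlow : ∀ᶠ z in 𝓝 z₀, c * z ^ 2 ≤ |h z|) :
    IntegrableAtFilter (fun z => z ^ 2 * J z) (𝓝 z₀) := by
  obtain ⟨U, hU, hUo, hz⟩ := eventually_nhds_iff.1 hlow
  refine ⟨U, hUo.mem_nhds hz, ?_⟩
  have hb : IntegrableOn (fun z => (z ^ 2 / h z) * (h z * J z)) U := by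
    refine Integrable.bdd_mul (c := 1 / c) hi.integrableOn ?_ ?_
    · exact (Measurable.div (by fun_prop) hh.measurable).aestronglyMeasurable
    · refine (ae_restrict_iff' hUo.measurableSet).2 (Eventually.of_forall fun z hzU => ?_)
      rw [Real.norm_eq_abs, abs_div, abs_of_nonneg (sq_nonneg z)]
      rcases eq_or_ne (h z) 0 with h0 | h0
      · simp [h0, hc.le]
      · rw [div_le_div_iff₀ (abs_pos.2 h0) hc]
        have := hU z hzU
        linarith
  refine hb.congr_fun (fun z hzU => ?_) hUo.measurableSet
  rcases eq_or_ne (h z) 0 with h0 | h0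
  · have h1 := hU z hzU
    rw [h0, abs_zero] at h1
    have h2 : z ^ 2 = 0 := le_antisymm (by nlinarith) (sq_nonneg z)
    simp [h2]
  · field_simp

/-- A bounded continuous function taking a larger value to the right of a smaller one is touched
from above, at some point, by a strictly concave parabola. -/
lemma exists_parabola_touching_of_lt {f : ℝ → ℝ} (hf : Continuous f) {M : ℝ}
    (hM : ∀ x, |f x| ≤ M) {p q : ℝ} (hpq : p < q) (hlt : f p < f q) :
    ∃ x c, 0 < c ∧ ∀ᶠ z in 𝓝 (0 : ℝ), f (x - z) + f (x + z) - 2 * f x ≤ -(c * z ^ 2) := by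
  have hM0 : 0 ≤ M := (abs_nonneg _).trans (hM p)
  obtain ⟨a, ha⟩ : ∃ a, a = (f q - f p) / (2 * (q - p)) := ⟨_, rfl⟩
  have hd : 0 < q - p := sub_pos.2 hpq
  have ha0 : 0 < a := by rw [ha]; exact div_pos (sub_pos.2 hlt) (by linarith)
  have haq : a * (q - p) = (f q - f p) / 2 := by rw [ha]; field_simp
  -- With this width, the slope `a` brings `f` at the right end `p + ρ` below its value at `q`.
  obtain ⟨ρ, hρ⟩ : ∃ ρ, ρ = (2 * M + 1) / a + (q - p) := ⟨_, rfl⟩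
  have hρq : q - p < ρ := by
    have : 0 < (2 * M + 1) / a := by positivity
    linarith
  have haρ : a * ρ = 2 * M + 1 + a * (q - p) := by rw [hρ]; field_simp
  have hρ0 : 0 < ρ := hd.trans hρq
  obtain ⟨c, hc⟩ : ∃ c, c = 1 / (2 * ρ ^ 2) := ⟨_, rfl⟩
  have hc0 : 0 < c := by rw [hc]; positivity
  have hcρ : c * ρ ^ 2 = 1 / 2 := by rw [hc]; field_simp
  obtain ⟨g, hg⟩ : ∃ g : ℝ → ℝ, g = fun y => f y - a * (y - p) + c * (y - p) ^ 2 := ⟨_, rfl⟩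
  have hgc : Continuous g := by rw [hg]; fun_prop
  obtain ⟨x, hx, hmax⟩ := isCompact_Icc.exists_isMaxOn
    (nonempty_Icc.2 (by linarith : p ≤ p + ρ)) hgc.continuousOn
  have hgq : g q ≤ g x := hmax ⟨hpq.le, by linarith⟩
  have hcq : 0 ≤ c * (q - p) ^ 2 := by positivity
  have hxp : p < x := by
    refine lt_of_le_of_ne hx.1 fun h => ?_
    rw [← h] at hgq
    simp only [hg, sub_self] at hgq
    nlinarith
  have hxr : x < p + ρ := by
    refine lt_of_le_of_ne hx.2 fun h => ?_
    rw [h] at hgq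
    simp only [hg, add_sub_cancel_left] at hgq
    have h1 := abs_le.1 (hM q)
    have h2 := abs_le.1 (hM (p + ρ))
    linarith
  refine ⟨x, 2 * c, by positivity, ?_⟩
  have hnb : Icc p (p + ρ) ∈ 𝓝 x := Icc_mem_nhds hxp hxr
  have t1 : Tendsto (fun z : ℝ => x - z) (𝓝 0) (𝓝 x) := by
    have : Continuous fun z : ℝ => x - z := by fun_prop
    simpa using this.tendsto 0
  have t2 : Tendsto (fun z : ℝ => x + z) (𝓝 0) (𝓝 x) := by
    have : Continuous fun z : ℝ => x + z := by fun_prop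
    simpa using this.tendsto 0
  filter_upwards [t1.eventually_mem hnb, t2.eventually_mem hnb] with z h1 h2
  have e1 : g (x - z) ≤ g x := hmax h1
  have e2 : g (x + z) ≤ g x := hmax h2
  simp only [hg] at e1 e2
  nlinarith

/-- A bounded continuous nonconstant function is touched at some point by a strictly concave
parabola from above or by a strictly convex one from below, so that its symmetric second
difference there is at least quadratic in size. -/
lemma exists_parabola_touching {f : ℝ → ℝ} (hf : Continuous f) {M : ℝ}
    (hM : ∀ x, |f x| ≤ M) (hne : ∃ p q, f p ≠ f q) :
    ∃ x c, 0 < c ∧ ∀ᶠ z in 𝓝 (0 : ℝ), c * z ^ 2 ≤ |f (x - z) + f (x + z) - 2 * f x| := by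
  have key : ∃ p q, p < q ∧ f p ≠ f q := by
    obtain ⟨p, q, h⟩ := hne
    rcases lt_trichotomy p q with h1 | h1 | h1
    · exact ⟨p, q, h1, h⟩
    · exact absurd (congrArg f h1) h
    · exact ⟨q, p, h1, h.symm⟩
  obtain ⟨p, q, hpq, h⟩ := key
  rcases lt_or_gt_of_ne h with h1 | h1
  · obtain ⟨x, c, hc, hx⟩ := exists_parabola_touching_of_lt hf hM hpq h1
    refine ⟨x, c, hc, hx.mono fun z hz => ?_⟩
    have := neg_abs_le (f (x - z) + f (x + z) - 2 * f x)
    linarith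
  · obtain ⟨x, c, hc, hx⟩ := exists_parabola_touching_of_lt (f := fun y => -f y) hf.neg
      (M := M) (by simpa using hM) hpq (neg_lt_neg h1)
    refine ⟨x, c, hc, hx.mono fun z hz => ?_⟩
    have := le_abs_self (f (x - z) + f (x + z) - 2 * f x)
    linarith

/-- The symmetrized form of `D f (x)` for an even kernel. -/
lemma symm_integral {J f : ℝ → ℝ} (hJ : ∀ z, J (-z) = J z) {x : ℝ}
    (hi : Integrable fun z => (f (x - z) - f x) * J z) :
    Integrable (fun z => (f (x - z) + f (x + z) - 2 * f x) * J z) ∧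
    ∫ z, (f (x - z) + f (x + z) - 2 * f x) * J z = 2 * ∫ z, (f (x - z) - f x) * J z := by
  have hi' : Integrable fun z => (f (x + z) - f x) * J z := by
    simpa [hJ] using hi.comp_neg
  have e' : ∫ z, (f (x + z) - f x) * J z = ∫ z, (f (x - z) - f x) * J z := by
    rw [← integral_neg_eq_self]
    simp [hJ, sub_eq_add_neg]
  have e : (fun z => (f (x - z) + f (x + z) - 2 * f x) * J z) =
      fun z => (f (x - z) - f x) * J z + (f (x + z) - f x) * J z := by
    funext z; ring
  rw [e]
  refine ⟨hi.add hi', ?_⟩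
  rw [integral_add hi hi', e', two_mul]

/-- If `z ^ 2 * J z` fails to be integrable near `z₀`, every bounded continuous `f` for which all
the integrals `D f (x)` converge absolutely is periodic, with a period depending only on `z₀`. -/
lemma exists_periodic {J : ℝ → ℝ} (hJ : ∀ z, J (-z) = J z) {z₀ : ℝ}
    (hz₀ : ¬ IntegrableAtFilter (fun z => z ^ 2 * J z) (𝓝 z₀)) :
    ∃ P : ℝ, 0 < P ∧ ∀ f : ℝ → ℝ, Continuous f → (∃ M, ∀ x, |f x| ≤ M) →
      (∀ x, Integrable fun z => (f (x - z) - f x) * J z) → Function.Periodic f P := by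
  rcases eq_or_ne z₀ 0 with rfl | h0
  · refine ⟨1, one_pos, fun f hf ⟨M, hM⟩ hi => ?_⟩
    by_contra hper
    have hne : ∃ p q, f p ≠ f q := by
      by_contra! hcon
      exact hper fun x => hcon _ _
    obtain ⟨x, c, hc, hx⟩ := exists_parabola_touching hf hM hne
    exact hz₀ (integrableAt_sq_mul (by fun_prop) (symm_integral hJ (hi x)).1 hc hx)
  · have key : ∀ f : ℝ → ℝ, Continuous f →
        (∀ x, Integrable fun z => (f (x - z) - f x) * J z) → ∀ x, f (x - z₀) = f x := by
      intro f hf hi x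
      by_contra hne
      have hd : 0 < |f (x - z₀) - f x| := abs_pos.2 (sub_ne_zero.2 hne)
      have hz2 : 0 < z₀ ^ 2 := by positivity
      refine hz₀ (integrableAt_sq_mul (h := fun z => f (x - z) - f x) (by fun_prop) (hi x)
        (c := |f (x - z₀) - f x| / (2 * z₀ ^ 2)) (by positivity) ?_)
      have hcont : Continuous fun z => |f (x - z) - f x| -
          |f (x - z₀) - f x| / (2 * z₀ ^ 2) * z ^ 2 := by fun_prop
      have hpos : 0 < |f (x - z₀) - f x| - |f (x - z₀) - f x| / (2 * z₀ ^ 2) * z₀ ^ 2 := by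
        have : |f (x - z₀) - f x| / (2 * z₀ ^ 2) * z₀ ^ 2 = |f (x - z₀) - f x| / 2 := by
          field_simp
        rw [this]; linarith
      filter_upwards [hcont.continuousAt.eventually (lt_mem_nhds hpos)] with z hz
      linarith
    refine ⟨|z₀|, abs_pos.2 h0, fun f hf _ hi => ?_⟩
    have hP : Function.Periodic f z₀ := fun x => by
      simpa using (key f hf hi (x + z₀)).symm
    rcases abs_choice z₀ with h | h
    · rwa [h]
    · rw [h]; exact hP.neg

/-! ### The logarithmic barrier -/

/-- The uniform one-sided second difference bound for the barrier `log (1 + x ^ 2)`. -/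
lemma log_second_diff (x z : ℝ) :
    Real.log (1 + (x - z) ^ 2) + Real.log (1 + (x + z) ^ 2) - 2 * Real.log (1 + x ^ 2) ≤
      2 * Real.log (1 + z ^ 2) := by
  have h1 : Real.log (1 + (x - z) ^ 2) + Real.log (1 + (x + z) ^ 2) ≤
      Real.log (((1 + x ^ 2) * (1 + z ^ 2)) ^ 2) := by
    rw [← Real.log_mul (by positivity) (by positivity)]
    refine Real.log_le_log (by positivity) ?_
    have a1 : (1 + (x - z) ^ 2) * (1 + (x + z) ^ 2) =
        (1 + x ^ 2 + z ^ 2) ^ 2 - 4 * (x * z) ^ 2 := by ring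
    have a2 : (1 + x ^ 2) * (1 + z ^ 2) = 1 + x ^ 2 + z ^ 2 + (x * z) ^ 2 := by ring
    rw [a1, a2]
    nlinarith [sq_nonneg (x * z), sq_nonneg x, sq_nonneg z]
  rw [Real.log_pow, Real.log_mul (by positivity) (by positivity)] at h1
  push_cast at h1
  linarith

/-- The barrier bound `log (1 + z ^ 2)` has a finite `J`-integral: it is at most `z ^ 2` near the
origin, and at infinity it grows slower than `|z| ^ s` up to a constant, against a tail of `J` of
order `|z| ^ (-1 - 2 s)`. -/
lemma integrable_log_mul {s : ℝ} (hs : 0 < s) {J : ℝ → ℝ} {J0 J1 R0 : ℝ}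
    (hJ : AdmissibleKernel s J J0 J1 R0)
    (hloc : ∀ z₀, IntegrableAtFilter (fun z => z ^ 2 * J z) (𝓝 z₀)) :
    Integrable fun z => Real.log (1 + z ^ 2) * J z := by
  have hli : LocallyIntegrable (fun z => z ^ 2 * J z) := hloc
  have hJm : AEStronglyMeasurable J := by
    have h1 : AEStronglyMeasurable fun z : ℝ => (z ^ 2)⁻¹ * (z ^ 2 * J z) :=
      (Measurable.aestronglyMeasurable (by fun_prop)).mul hli.aestronglyMeasurable
    refine h1.congr ?_
    filter_upwards [compl_mem_ae_iff.2 (measure_singleton (0 : ℝ))] with z hz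
    have : z ≠ 0 := hz
    field_simp
  have hm : AEStronglyMeasurable fun z => Real.log (1 + z ^ 2) * J z :=
    (Measurable.aestronglyMeasurable (by fun_prop)).mul hJm
  have hlog0 : ∀ z : ℝ, 0 ≤ Real.log (1 + z ^ 2) := fun z =>
    Real.log_nonneg (by nlinarith [sq_nonneg z])
  have hin : IntegrableOn (fun z => Real.log (1 + z ^ 2) * J z) (Icc (-1) 1) := by
    refine (hli.integrableOn_isCompact isCompact_Icc).mono' hm.restrict
      (Eventually.of_forall fun z => ?_)
    rw [Real.norm_of_nonneg (mul_nonneg (hlog0 z) (hJ.nonneg z))]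
    refine mul_le_mul_of_nonneg_right ?_ (hJ.nonneg z)
    have := Real.log_le_sub_one_of_pos (by positivity : 0 < 1 + z ^ 2)
    linarith
  have hright : IntegrableOn (fun z => Real.log (1 + z ^ 2) * J z) (Ioi 1) := by
    have hr : IntegrableOn (fun z : ℝ => (2 ^ (s / 2) / (s / 2) * J0) * z ^ (-1 - s)) (Ioi 1) :=
      (integrableOn_Ioi_rpow_of_lt (by linarith) one_pos).const_mul _
    refine hr.mono' hm.restrict ?_
    refine (ae_restrict_iff' measurableSet_Ioi).2 (Eventually.of_forall fun z hz => ?_)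
    have hz1 : 1 < z := hz
    have hz0 : 0 < z := one_pos.trans hz1
    rw [Real.norm_of_nonneg (mul_nonneg (hlog0 z) (hJ.nonneg z))]
    have hup := hJ.upper z (by rwa [abs_of_pos hz0])
    rw [abs_of_pos hz0] at hup
    have hl : Real.log (1 + z ^ 2) ≤ 2 ^ (s / 2) / (s / 2) * z ^ s := by
      calc Real.log (1 + z ^ 2) ≤ (1 + z ^ 2) ^ (s / 2) / (s / 2) :=
            Real.log_le_rpow_div (by positivity) (by positivity)
        _ ≤ (2 * z ^ 2) ^ (s / 2) / (s / 2) := by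
            gcongr
            nlinarith
        _ = 2 ^ (s / 2) / (s / 2) * z ^ s := by
            rw [Real.mul_rpow (by norm_num) (by positivity), ← Real.rpow_natCast z 2,
              ← Real.rpow_mul hz0.le]
            have : ((2 : ℕ) : ℝ) * (s / 2) = s := by push_cast; ring
            rw [this]; ring
    have hJ0 := hJ.J0_pos
    calc Real.log (1 + z ^ 2) * J z
        ≤ (2 ^ (s / 2) / (s / 2) * z ^ s) * (J0 / z ^ (1 + 2 * s)) :=
          mul_le_mul hl hup (hJ.nonneg z) (by positivity)
      _ = (2 ^ (s / 2) / (s / 2) * J0) * (z ^ s / z ^ (1 + 2 * s)) := by ring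
      _ = _ := by
          have : -1 - s = s - (1 + 2 * s) := by ring
          rw [← Real.rpow_sub hz0, this]
  have hleft : IntegrableOn (fun z => Real.log (1 + z ^ 2) * J z) (Iio (-1)) := by
    rw [← integrable_indicator_iff measurableSet_Iio]
    have h1 := ((integrable_indicator_iff measurableSet_Ioi).2 hright).comp_neg
    refine h1.congr (Eventually.of_forall fun z => ?_)
    simp [indicator_apply, hJ.even, lt_neg]
  have hall := (hleft.union hin).union hright
  rw [← integrableOn_univ]
  refine hall.mono_set fun z _ => ?_
  by_cases h1 : z < -1
  · exact Or.inl (Or.inl h1)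
  · by_cases h2 : z ≤ 1
    · exact Or.inl (Or.inr ⟨not_lt.1 h1, h2⟩)
    · exact Or.inr (not_le.1 h2)

/-! ### The maximum principle -/

lemma hasDerivAt_nonpos_of_left_min {g : ℝ → ℝ} {g' a b : ℝ} (hab : a < b)
    (hg : HasDerivAt g g' b) (hmin : ∀ t ∈ Ioo a b, g b ≤ g t) : g' ≤ 0 := by
  have h := (hasDerivWithinAt_iff_tendsto_slope' self_notMem_Iio).1
    (hg.hasDerivWithinAt (s := Iio b))
  refine le_of_tendsto h ?_
  filter_upwards [Ioo_mem_nhdsLT hab] with t ht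
  rw [slope_def_field]
  exact div_nonpos_of_nonneg_of_nonpos (sub_nonneg.2 (hmin t ht)) (sub_nonpos.2 ht.2.le)

/-- adapted comparison principle on `[t₀, t₁)`, with comparison on
the half-line `[R, +∞)` and strict ordering on `(-∞, R]`. -/
theorem adapted_comparison_principle
    (s : ℝ) (hs : 0 < s) (J : ℝ → ℝ) (J0 J1 R0 : ℝ)
    (hJ : AdmissibleKernel s J J0 J1 R0)
    (t0 t1 R : ℝ) (ht0 : 0 ≤ t0) (ht01 : t0 < t1) (u v : ℝ → ℝ → ℝ)
    (hub : ∃ M, ∀ t ∈ Ico t0 t1, ∀ x, |u t x| ≤ M)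
    (hvb : ∃ M, ∀ t ∈ Ico t0 t1, ∀ x, |v t x| ≤ M)
    (huc : ContinuousOn (fun p : ℝ × ℝ => u p.1 p.2) (Ico t0 t1 ×ˢ univ))
    (hvc : ContinuousOn (fun p : ℝ × ℝ => v p.1 p.2) (Ico t0 t1 ×ˢ univ))
    (huC1 : ∀ x, ContDiffOn ℝ 1 (fun t => u t x) (Ioo t0 t1))
    (hvC1 : ∀ x, ContDiffOn ℝ 1 (fun t => v t x) (Ioo t0 t1))
    (hui : ∀ t ∈ Ioo t0 t1, ∀ x,
      Integrable fun z : ℝ => (u t (x - z) - u t x) * J z)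
    (hvi : ∀ t ∈ Ioo t0 t1, ∀ x,
      Integrable fun z : ℝ => (v t (x - z) - v t x) * J z)
    (hsuper : ∀ t ∈ Ioo t0 t1, ∀ x, R ≤ x →
      nonlocalD J u t x ≤ deriv (fun τ => u τ x) t)
    (hsub : ∀ t ∈ Ioo t0 t1, ∀ x, R ≤ x →
      deriv (fun τ => v τ x) t ≤ nonlocalD J v t x)
    (hleft : ∀ t ∈ Ioo t0 t1, ∀ x ≤ R, v t x < u t x)
    (h0 : ∀ x, v t0 x ≤ u t0 x) :
    ∀ t ∈ Ioo t0 t1, ∀ x, v t x ≤ u t x := by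
  obtain ⟨Mu, hMu⟩ := hub
  obtain ⟨Mv, hMv⟩ := hvb
  intro T hT x₁
  by_cases hloc : ∀ z₀, IntegrableAtFilter (fun z => z ^ 2 * J z) (𝓝 z₀)
  swap
  · push Not at hloc
    obtain ⟨z₀, hz₀⟩ := hloc
    obtain ⟨P, hP, hper⟩ := exists_periodic hJ.even hz₀
    have hmaps : MapsTo (fun x : ℝ => (T, x)) univ (Ico t0 t1 ×ˢ univ) :=
      fun x _ => ⟨⟨hT.1.le, hT.2⟩, mem_univ _⟩
    have hslice : ∀ f : ℝ → ℝ → ℝ,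
        ContinuousOn (fun p : ℝ × ℝ => f p.1 p.2) (Ico t0 t1 ×ˢ univ) →
        Continuous (f T) := fun f hf => by
      rw [← continuousOn_univ]
      exact hf.comp (by fun_prop) hmaps
    have pu := hper (u T) (hslice u huc) ⟨Mu, hMu T ⟨hT.1.le, hT.2⟩⟩ (hui T hT)
    have pv := hper (v T) (hslice v hvc) ⟨Mv, hMv T ⟨hT.1.le, hT.2⟩⟩ (hvi T hT)
    obtain ⟨n, hn⟩ := exists_nat_ge ((x₁ - R) / P)
    rw [div_le_iff₀ hP] at hn
    rw [← pu.sub_nat_mul_eq n, ← pv.sub_nat_mul_eq n]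
    exact (hleft T hT _ (by linarith)).le
  have hI := integrable_log_mul hs hJ hloc
  obtain ⟨K, hK⟩ : ∃ K, K = ∫ z, Real.log (1 + z ^ 2) * J z := ⟨_, rfl⟩
  have hlog0 : ∀ z : ℝ, 0 ≤ Real.log (1 + z ^ 2) := fun z =>
    Real.log_nonneg (by nlinarith [sq_nonneg z])
  have hK0 : 0 ≤ K := by
    rw [hK]; exact integral_nonneg fun z => mul_nonneg (hlog0 z) (hJ.nonneg z)
  by_contra hneg
  push Not at hneg
  have hTt : 0 < T - t0 := sub_pos.2 hT.1
  obtain ⟨B, hB⟩ : ∃ B, B = Real.log (1 + x₁ ^ 2) + (K + 1) * (T - t0) := ⟨_, rfl⟩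
  have hB0 : 0 < B := by have := hlog0 x₁; rw [hB]; positivity
  -- Small enough for the penalized function to stay negative at `(T, x₁)`.
  obtain ⟨ε, hε⟩ : ∃ ε, ε = (v T x₁ - u T x₁) / (2 * B) := ⟨_, rfl⟩
  have hε0 : 0 < ε := by rw [hε]; exact div_pos (sub_pos.2 hneg) (by positivity)
  have hεB : ε * B = (v T x₁ - u T x₁) / 2 := by rw [hε]; field_simp
  obtain ⟨Φ, hΦ⟩ : ∃ Φ : ℝ → ℝ → ℝ, Φ = fun t x =>
    u t x - v t x + ε * (Real.log (1 + x ^ 2) + (K + 1) * (t - t0)) := ⟨_, rfl⟩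
  have hΦneg : Φ T x₁ < 0 := by
    simp only [hΦ, ← hB, hεB]; linarith
  -- Outside `[-X, X]` the barrier dominates the bound `Mu + Mv` on `|u - v|`.
  obtain ⟨X, hX⟩ : ∃ X, X = Real.exp ((Mu + Mv) / ε) + |x₁| := ⟨_, rfl⟩
  have hout : ∀ t ∈ Icc t0 T, ∀ x, X ≤ |x| → 0 ≤ Φ t x := by
    intro t ht x hx
    have htI : t ∈ Ico t0 t1 := ⟨ht.1, ht.2.trans_lt hT.2⟩
    have h1 := abs_le.1 (hMu t htI x)
    have h2 := abs_le.1 (hMv t htI x)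
    have h3 : Real.exp ((Mu + Mv) / ε) ≤ 1 + x ^ 2 := by
      have := abs_nonneg x₁
      have := sq_abs x
      nlinarith [sq_nonneg (|x| - 1)]
    have h4 : (Mu + Mv) / ε ≤ Real.log (1 + x ^ 2) :=
      (Real.le_log_iff_exp_le (by positivity)).2 h3
    rw [div_le_iff₀ hε0] at h4
    have h5 : 0 ≤ ε * ((K + 1) * (t - t0)) :=
      mul_nonneg hε0.le (mul_nonneg (by linarith) (sub_nonneg.2 ht.1))
    simp only [hΦ]
    linarith
  have hx₁X : |x₁| ≤ X := by rw [hX]; linarith [Real.exp_pos ((Mu + Mv) / ε)]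
  have hsubset : Icc t0 T ×ˢ Icc (-X) X ⊆ Ico t0 t1 ×ˢ (univ : Set ℝ) := fun p hp =>
    ⟨⟨hp.1.1, hp.1.2.trans_lt hT.2⟩, mem_univ _⟩
  have hcont : ContinuousOn (fun p : ℝ × ℝ => Φ p.1 p.2) (Icc t0 T ×ˢ Icc (-X) X) := by
    simp only [hΦ]
    refine ((huc.mono hsubset).sub (hvc.mono hsubset)).add (Continuous.continuousOn ?_)
    have : Continuous fun p : ℝ × ℝ => Real.log (1 + p.2 ^ 2) :=
      Continuous.log (by fun_prop) fun p => by positivity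
    fun_prop
  have hmem : (T, x₁) ∈ Icc t0 T ×ˢ Icc (-X) X :=
    ⟨⟨hT.1.le, le_rfl⟩, abs_le.1 hx₁X⟩
  obtain ⟨⟨t', x'⟩, hp, hmin⟩ :=
    (isCompact_Icc.prod isCompact_Icc).exists_isMinOn ⟨_, hmem⟩ hcont
  have hm0 : Φ t' x' < 0 := (hmin hmem : Φ t' x' ≤ Φ T x₁).trans_lt hΦneg
  have hminall : ∀ t ∈ Icc t0 T, ∀ x, Φ t' x' ≤ Φ t x := by
    intro t ht x
    rcases le_total X |x| with h | h
    · exact hm0.le.trans (hout t ht x h)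
    · exact hmin (show (t, x) ∈ Icc t0 T ×ˢ Icc (-X) X from ⟨ht, abs_le.1 h⟩)
  have ht'I : t' ∈ Icc t0 T := hp.1
  have hpen : ∀ t ∈ Icc t0 T, ∀ x,
      0 ≤ ε * (Real.log (1 + x ^ 2) + (K + 1) * (t - t0)) := fun t ht x =>
    mul_nonneg hε0.le (add_nonneg (hlog0 x)
      (mul_nonneg (by linarith) (sub_nonneg.2 ht.1)))
  have ht'0 : t0 < t' := by
    refine lt_of_le_of_ne ht'I.1 fun h => ?_
    have h1 := hpen t' ht'I x'
    have h2 := h0 x'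
    simp only [hΦ] at hm0
    rw [← h] at hm0 h1
    linarith
  have ht' : t' ∈ Ioo t0 t1 := ⟨ht'0, ht'I.2.trans_lt hT.2⟩
  have hx' : R ≤ x' := by
    by_contra h
    have h1 := hpen t' ht'I x'
    have h2 := hleft t' ht' x' (not_le.1 h).le
    simp only [hΦ] at hm0
    linarith
  have hdiff : ∀ f : ℝ → ℝ → ℝ, (∀ x, ContDiffOn ℝ 1 (fun t => f t x) (Ioo t0 t1)) →
      HasDerivAt (fun τ => f τ x') (deriv (fun τ => f τ x') t') t' := fun f hf =>
    (((hf x').differentiableOn (by norm_num)).differentiableAt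
      (isOpen_Ioo.mem_nhds ht')).hasDerivAt
  have hder : HasDerivAt (fun τ => Φ τ x') (deriv (fun τ => u τ x') t' -
      deriv (fun τ => v τ x') t' + ε * (K + 1)) t' := by
    simp only [hΦ]
    refine ((hdiff u huC1).sub (hdiff v hvC1)).add ?_
    have := ((((hasDerivAt_id t').sub_const t0).const_mul (K + 1)).const_add
      (Real.log (1 + x' ^ 2))).const_mul ε
    simpa using this
  have htime := hasDerivAt_nonpos_of_left_min ht'0 hder fun t ht =>
    hminall t ⟨ht.1.le, ht.2.le.trans ht'I.2⟩ x'
  obtain ⟨iu, eu⟩ := symm_integral hJ.even (hui t' ht' x')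
  obtain ⟨iv, ev⟩ := symm_integral hJ.even (hvi t' ht' x')
  have hspace : ∫ z, -(2 * ε) * (Real.log (1 + z ^ 2) * J z) ≤
      ∫ z, ((u t' (x' - z) + u t' (x' + z) - 2 * u t' x') * J z -
        (v t' (x' - z) + v t' (x' + z) - 2 * v t' x') * J z) := by
    refine integral_mono (hI.const_mul _) (iu.sub iv) fun z => ?_
    have h1 := hminall t' ht'I (x' - z)
    have h2 := hminall t' ht'I (x' + z)
    have h3 := mul_le_mul_of_nonneg_left (log_second_diff x' z) hε0.le
    simp only [hΦ] at h1 h2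
    have h4 : -(2 * ε) * Real.log (1 + z ^ 2) ≤
        (u t' (x' - z) + u t' (x' + z) - 2 * u t' x') -
        (v t' (x' - z) + v t' (x' + z) - 2 * v t' x') := by linarith
    have h5 := mul_le_mul_of_nonneg_right h4 (hJ.nonneg z)
    simp only
    linarith
  rw [integral_const_mul, integral_sub iu iv, eu, ev, ← hK] at hspace
  have a1 := hsuper t' ht' x' hx'
  have a2 := hsub t' ht' x' hx'
  simp only [nonlocalD] at a1 a2
  linarith
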